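/- Let n ≥ 7. The assignment σ_i ↦ ∏_{j=1}^{i−1}(j, n+j) · (i, n+i+1)(i+1, n+i) · ∏_{j=i+2}^{n}(j, n+j), for 1 ≤ i ≤ n−1, induces a well-defined group homomorphism ρ_{L3} : B_n → Sym_{2n}, and ρ_{L3} is transitive. -/

import Mathlib

/-- The braid relations on `n-1` generators; generator `i : Fin (n-1)` stands for the
Artin generator `σ_{i+1}` (so the indexing is 0-based). The relations are
`σ_i σ_j = σ_j σ_i` for `|i-j| ≥ 2` and `σ_i σ_j σ_i = σ_j σ_i σ_j` for `|i-j| = 1`. -/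
def braidRels (n : ℕ) : Set (FreeGroup (Fin (n - 1))) :=
  { r | ∃ i j : Fin (n - 1), ((i : ℕ) + 2 ≤ (j : ℕ) ∨ (j : ℕ) + 2 ≤ (i : ℕ)) ∧
      r = FreeGroup.of i * FreeGroup.of j * (FreeGroup.of j * FreeGroup.of i)⁻¹ } ∪
  { r | ∃ i j : Fin (n - 1), (j : ℕ) = (i : ℕ) + 1 ∧
      r = FreeGroup.of i * FreeGroup.of j * FreeGroup.of i *
          (FreeGroup.of j * FreeGroup.of i * FreeGroup.of j)⁻¹ }

/-- The braid group `B_n`, given by the Artin presentation. -/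
abbrev BraidGroup (n : ℕ) := PresentedGroup (braidRels n)

/-- The Artin generator `σ_{i+1}` of the braid group `B_n`, for `i : Fin (n-1)`. -/
def σ {n : ℕ} (i : Fin (n - 1)) : BraidGroup n := PresentedGroup.of i

/-- A homomorphism to the symmetric group `Sym_k = Perm (Fin k)` is transitive if its
image acts transitively on the `k` points. -/
def IsTransitiveHom {G : Type*} [Group G] {k : ℕ} (φ : G →* Equiv.Perm (Fin k)) : Prop :=
  ∀ x y : Fin k, ∃ g : G, φ g x = y

/-- A homomorphism from `B_n` is cyclic if it sends all the generators `σ_1, …, σ_{n-1}`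
to a single element. -/
def IsCyclicHom {n : ℕ} {H : Type*} [Group H] (ψ : BraidGroup n →* H) : Prop :=
  ∀ i j : Fin (n - 1), ψ (σ i) = ψ (σ j)

/-- The transposition `(j, n+j)` (0-based) in `Sym_{2n}`. -/
def tw (n : ℕ) (j : Fin n) : Equiv.Perm (Fin (2 * n)) :=
  Equiv.swap ⟨j, by have := j.isLt; omega⟩ ⟨n + j, by have := j.isLt; omega⟩

/-- The 4-cycle `(a, b, c, d)` sending `a ↦ b ↦ c ↦ d ↦ a` (for pairwise distinct
points), written as the product of transpositions `(a d)(a c)(a b)`. -/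
def cyc4 {m : ℕ} (a b c d : Fin m) : Equiv.Perm (Fin m) :=
  Equiv.swap a d * Equiv.swap a c * Equiv.swap a b

/-- `ρ_{L1}(σ_{i+1})`: the 4-cycle `(i, n+i+1, n+i, i+1)` on the 0-based points of
`Sym_{2n}`, for `i : Fin (n-1)`. -/
def linL1Gen (n : ℕ) (i : Fin (n - 1)) : Equiv.Perm (Fin (2 * n)) :=
  cyc4 ⟨i, by have := i.isLt; omega⟩ ⟨n + i + 1, by have := i.isLt; omega⟩
    ⟨n + i, by have := i.isLt; omega⟩ ⟨(i : ℕ) + 1, by have := i.isLt; omega⟩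

/-- The product `∏_{j < i} (j, n+j)` (0-based) in `Sym_{2n}`. -/
def lowTw (n : ℕ) (i : Fin (n - 1)) : Equiv.Perm (Fin (2 * n)) :=
  ((List.finRange n).map (fun j : Fin n => if (j : ℕ) < (i : ℕ) then tw n j else 1)).prod

/-- The product `∏_{j ≥ i+2} (j, n+j)` (0-based) in `Sym_{2n}`. -/
def highTw (n : ℕ) (i : Fin (n - 1)) : Equiv.Perm (Fin (2 * n)) :=
  ((List.finRange n).map (fun j : Fin n => if (i : ℕ) + 2 ≤ (j : ℕ) then tw n j else 1)).prod

/-- `ρ_{L2}(σ_{i+1}) = ∏_{j<i}(j, n+j) · (i, n+i+1, n+i, i+1) · ∏_{j≥i+2}(j, n+j)`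
(0-based) in `Sym_{2n}`. -/
def linL2Gen (n : ℕ) (i : Fin (n - 1)) : Equiv.Perm (Fin (2 * n)) :=
  lowTw n i * linL1Gen n i * highTw n i

/-- `ρ_{L3}(σ_{i+1}) = ∏_{j<i}(j, n+j) · (i, n+i+1)(i+1, n+i) · ∏_{j≥i+2}(j, n+j)`
(0-based) in `Sym_{2n}`. -/
def linL3Gen (n : ℕ) (i : Fin (n - 1)) : Equiv.Perm (Fin (2 * n)) :=
  lowTw n i *
    (Equiv.swap ⟨i, by have := i.isLt; omega⟩ ⟨n + i + 1, by have := i.isLt; omega⟩ *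
     Equiv.swap ⟨(i : ℕ) + 1, by have := i.isLt; omega⟩ ⟨n + i, by have := i.isLt; omega⟩) *
  highTw n i

theorem tw_val (n : ℕ) (j : Fin n) (x : Fin (2*n)) :
    (tw n j x : ℕ) = if (x:ℕ) = j then n + j else if (x:ℕ) = n + j then j else x := by
  unfold tw
  rw [Equiv.swap_apply_def]
  simp only [Fin.ext_iff]
  split_ifs <;> simp

theorem prod_val (n : ℕ) (p : ℕ → Prop) [DecidablePred p] (l : List (Fin n)) (hl : l.Nodup)
    (x : Fin (2*n)) (j : Fin n) (hx : (x:ℕ) = j ∨ (x:ℕ) = n + j) :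
    ((l.map (fun j : Fin n => if p (j:ℕ) then tw n j else 1)).prod x : ℕ) =
      if j ∈ l ∧ p j then (if (x:ℕ) < n then n + j else j) else x := by
  induction l with
  | nil => simp
  | cons a l ih =>
    have ih := ih hl.of_cons
    have hal : a ∉ l := (List.nodup_cons.1 hl).1
    simp only [List.map_cons, List.prod_cons, Equiv.Perm.mul_apply]
    have hj := j.isLt
    have ha := a.isLt
    by_cases haj : a = j
    · subst haj
      by_cases hp : p a
      · simp only [hp, if_true, tw_val, ih, hal, List.mem_cons, true_or, and_true]
        simp only [if_false]
        split_ifs <;> omega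
      · simp only [hp, and_false, if_false] at ih ⊢
        simpa using ih
    · have haj' : (a:ℕ) ≠ j := fun h => haj (Fin.ext h)
      have hja : ¬ j = a := fun h => haj h.symm
      simp only [List.mem_cons, hja, false_or]
      by_cases hp : p a
      · simp only [hp, if_true, tw_val, ih]
        split_ifs <;> omega
      · simpa [hp] using ih

/-- value of the generator on naturals -/
def Lf (n i x : ℕ) : ℕ :=
  if x = i then n + i + 1 else if x = i + 1 then n + i
  else if x = n + i then i + 1 else if x = n + i + 1 then i
  else if x < n then n + x else x - n

theorem Lf_spec (n i x : ℕ) (hi : i + 1 < n) (hx : x < 2*n) :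
    (x = i ∧ Lf n i x = n + i + 1) ∨ (x = i + 1 ∧ Lf n i x = n + i) ∨
    (x = n + i ∧ Lf n i x = i + 1) ∨ (x = n + i + 1 ∧ Lf n i x = i) ∨
    (x < n ∧ x ≠ i ∧ x ≠ i + 1 ∧ Lf n i x = n + x) ∨
    (n ≤ x ∧ x ≠ n + i ∧ x ≠ n + i + 1 ∧ x = n + Lf n i x) := by
  unfold Lf
  split_ifs <;> omega

theorem Lf_lt (n i x : ℕ) (hi : i + 1 < n) (hx : x < 2*n) : Lf n i x < 2*n := by
  have := Lf_spec n i x hi hx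
  omega

theorem gen_val (n : ℕ) (i : Fin (n-1)) (x : Fin (2*n)) :
    (linL3Gen n i x : ℕ) = Lf n i x := by
  have hi := i.isLt
  have base : ∀ y : Fin (2*n), ∃ j : Fin n, (y:ℕ) = j ∨ (y:ℕ) = n + j := by
    intro y
    have := y.isLt
    by_cases h : (y:ℕ) < n
    · exact ⟨⟨y, h⟩, Or.inl rfl⟩
    · exact ⟨⟨y - n, by omega⟩, Or.inr (by simp; omega)⟩
  have low : ∀ y : Fin (2*n), (lowTw n i y : ℕ) =
      if (y:ℕ) < i then n + y else if n ≤ (y:ℕ) ∧ (y:ℕ) < n + i then y - n else y := by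
    intro y
    obtain ⟨j, hj⟩ := base y
    have := j.isLt
    have h := prod_val n (fun k => k < (i:ℕ)) (List.finRange n) (List.nodup_finRange n) y j hj
    unfold lowTw
    rw [h]
    simp only [List.mem_finRange, true_and]
    split_ifs <;> omega
  have high : ∀ y : Fin (2*n), (highTw n i y : ℕ) =
      if (i:ℕ) + 2 ≤ y ∧ (y:ℕ) < n then n + y else if n + i + 2 ≤ (y:ℕ) then y - n else y := by
    intro y
    obtain ⟨j, hj⟩ := base y
    have := j.isLt
    have h := prod_val n (fun k => (i:ℕ) + 2 ≤ k) (List.finRange n) (List.nodup_finRange n) y j hj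
    unfold highTw
    rw [h]
    simp only [List.mem_finRange, true_and]
    split_ifs <;> omega
  have sw : ∀ (a b y : Fin (2*n)), (Equiv.swap a b y : ℕ) =
      if (y:ℕ) = a then (b:ℕ) else if (y:ℕ) = b then (a:ℕ) else y := by
    intro a b y
    rw [Equiv.swap_apply_def]
    simp only [Fin.ext_iff]
    split_ifs <;> rfl
  have hx := x.isLt
  unfold linL3Gen
  simp only [Equiv.Perm.mul_apply]
  have H := high x
  generalize highTw n i x = y at H ⊢
  have H1 := sw ⟨(i : ℕ) + 1, by omega⟩ ⟨n + i, by omega⟩ y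
  generalize Equiv.swap _ _ y = z at H1 ⊢
  have H2 := sw ⟨i, by omega⟩ ⟨n + i + 1, by omega⟩ z
  generalize Equiv.swap _ _ z = w at H2 ⊢
  have H3 := low w
  generalize lowTw n i w = v at H3 ⊢
  have H4 := Lf_spec n i x (by omega) hx
  generalize Lf n i x = u at H4 ⊢
  clear low high sw base
  simp only at H1 H2
  rcases H4 with h|h|h|h|h|h <;>
  · split_ifs at H <;> first
    | omega
    | (split_ifs at H1 <;> first
        | omega
        | (split_ifs at H2 <;> first
            | omega
            | (split_ifs at H3 <;> omega)))

theorem Lf_comm (n i j x : ℕ) (hj : j + 1 < n) (hij : i + 2 ≤ j) (hx : x < 2*n) :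
    Lf n i (Lf n j x) = Lf n j (Lf n i x) := by
  have H : x = i ∨ x = i+1 ∨ x = j ∨ x = j+1 ∨ x = n+i ∨ x = n+i+1 ∨ x = n+j ∨ x = n+j+1 ∨
     (x < n ∧ x ≠ i ∧ x ≠ i+1 ∧ x ≠ j ∧ x ≠ j+1) ∨
     (n ≤ x ∧ x ≠ n+i ∧ x ≠ n+i+1 ∧ x ≠ n+j ∧ x ≠ n+j+1) := by omega
  have a1 := Lf_spec n i x (by omega) hx
  have a2 := Lf_spec n j x (by omega) hx
  have b1 := Lf_spec n i _ (by omega) (Lf_lt n j x (by omega) hx)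
  have b2 := Lf_spec n j _ (by omega) (Lf_lt n i x (by omega) hx)
  generalize Lf n i (Lf n j x) = u at *
  generalize Lf n j (Lf n i x) = v at *
  generalize Lf n i x = y at *
  generalize Lf n j x = z at *
  rcases H with h|h|h|h|h|h|h|h|h|h <;>
  · rcases a1 with a1|a1|a1|a1|a1|a1 <;> first
    | omega
    | (rcases a2 with a2|a2|a2|a2|a2|a2 <;> first
        | omega
        | (rcases b1 with b1|b1|b1|b1|b1|b1 <;> first
            | omega
            | (rcases b2 with b2|b2|b2|b2|b2|b2 <;> omega)))

set_option maxHeartbeats 8000000 in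
theorem Lf_braid (n i x : ℕ) (hj : i + 2 < n) (hx : x < 2*n) :
    Lf n i (Lf n (i+1) (Lf n i x)) = Lf n (i+1) (Lf n i (Lf n (i+1) x)) := by
  have H : x = i ∨ x = i+1 ∨ x = i+2 ∨ x = n+i ∨ x = n+i+1 ∨ x = n+i+2 ∨
     (x < n ∧ x ≠ i ∧ x ≠ i+1 ∧ x ≠ i+2) ∨
     (n ≤ x ∧ x ≠ n+i ∧ x ≠ n+i+1 ∧ x ≠ n+i+2) := by omega
  have hi : i + 1 < n := by omega
  have hi' : i + 1 + 1 < n := by omega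
  have a1 := Lf_spec n i x hi hx
  have a1' := Lf_lt n i x hi hx
  generalize Lf n i x = y1 at *
  have a2 := Lf_spec n (i+1) y1 hi' a1'
  have a2' := Lf_lt n (i+1) y1 hi' a1'
  generalize Lf n (i+1) y1 = y2 at *
  have a3 := Lf_spec n i y2 hi a2'
  generalize Lf n i y2 = y3 at *
  have b1 := Lf_spec n (i+1) x hi' hx
  have b1' := Lf_lt n (i+1) x hi' hx
  generalize Lf n (i+1) x = z1 at *
  have b2 := Lf_spec n i z1 hi b1'
  have b2' := Lf_lt n i z1 hi b1'
  generalize Lf n i z1 = z2 at *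
  have b3 := Lf_spec n (i+1) z2 hi' b2'
  generalize Lf n (i+1) z2 = z3 at *
  rcases H with h|h|h|h|h|h|h|h <;>
  · rcases a1 with a1|a1|a1|a1|a1|a1 <;> first
    | omega
    | (rcases a2 with a2|a2|a2|a2|a2|a2 <;> first
        | omega
        | (rcases a3 with a3|a3|a3|a3|a3|a3 <;> first
            | omega
            | (rcases b1 with b1|b1|b1|b1|b1|b1 <;> first
                | omega
                | (rcases b2 with b2|b2|b2|b2|b2|b2 <;> first
                    | omega
                    | (rcases b3 with b3|b3|b3|b3|b3|b3 <;> omega)))))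

theorem gen_comm (n : ℕ) (i j : Fin (n-1)) (h : (i:ℕ) + 2 ≤ j) :
    linL3Gen n i * linL3Gen n j = linL3Gen n j * linL3Gen n i := by
  ext x
  simp only [Equiv.Perm.mul_apply, gen_val]
  exact Lf_comm n i j x (by omega) h x.isLt

theorem gen_rels (n : ℕ) : ∀ r ∈ braidRels n, FreeGroup.lift (linL3Gen n) r = 1 := by
  rintro r (⟨i, j, h, rfl⟩ | ⟨i, j, h, rfl⟩)
  · rw [map_mul, map_inv, mul_inv_eq_one]
    simp only [map_mul, FreeGroup.lift_apply_of]
    rcases h with h | h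
    · exact gen_comm n i j h
    · exact (gen_comm n j i h).symm
  · rw [map_mul, map_inv, mul_inv_eq_one]
    simp only [map_mul, FreeGroup.lift_apply_of]
    ext x
    simp only [Equiv.Perm.mul_apply, gen_val, h]
    exact Lf_braid n i x (by omega) x.isLt

/-- Lin. For `n ≥ 7`, the assignment
`σ_i ↦ ∏_{j=1}^{i-1}(j, n+j) · (i, n+i+1)(i+1, n+i) · ∏_{j=i+2}^{n}(j, n+j)` induces a
well-defined group homomorphism `ρ_{L3} : B_n → Sym_{2n}`, and `ρ_{L3}` is transitive. -/
theorem linL3_exists_and_transitive (n : ℕ) (hn : 7 ≤ n) :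
    ∃ ρL3 : BraidGroup n →* Equiv.Perm (Fin (2 * n)),
      (∀ i : Fin (n - 1), ρL3 (σ i) = linL3Gen n i) ∧ IsTransitiveHom ρL3 := by
  refine ⟨PresentedGroup.toGroup (gen_rels n), fun i => PresentedGroup.toGroup.of (gen_rels n), ?_⟩
  have hσ : ∀ i : Fin (n-1), PresentedGroup.toGroup (gen_rels n) (σ i) = linL3Gen n i :=
    fun i => PresentedGroup.toGroup.of (gen_rels n)
  generalize PresentedGroup.toGroup (gen_rels n) = φ at hσ
  have step : ∀ (x y : Fin (2*n)) (i : ℕ), i < n - 1 → Lf n i x = y → ∃ g, φ g x = y := by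
    intro x y i hi h
    refine ⟨σ ⟨i, hi⟩, ?_⟩
    rw [hσ]
    ext
    rw [gen_val]
    exact h
  have tr : ∀ {x y z : Fin (2*n)}, (∃ g, φ g x = y) → (∃ g, φ g y = z) → ∃ g, φ g x = z := by
    rintro x y z ⟨g, rfl⟩ ⟨h, rfl⟩
    exact ⟨h * g, by simp⟩
  have sy : ∀ {x y : Fin (2*n)}, (∃ g, φ g x = y) → (∃ g, φ g y = x) := by
    rintro x y ⟨g, rfl⟩
    exact ⟨g⁻¹, by simp⟩
  have up : ∀ (x : ℕ) (hx : x < n), ∃ g, φ g ⟨x, by omega⟩ = (⟨n + x, by omega⟩ : Fin (2*n)) := by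
    intro x hx
    by_cases h : x < 2
    · refine step _ _ 2 (by omega) ?_
      simp only [Lf]
      split_ifs <;> omega
    · refine step _ _ 0 (by omega) ?_
      simp only [Lf]
      split_ifs <;> omega
  have zero : ∀ (x : ℕ) (hx : x < n), ∃ g, φ g ⟨0, by omega⟩ = (⟨x, by omega⟩ : Fin (2*n)) := by
    intro x
    induction x with
    | zero => intro _; exact ⟨1, by simp⟩
    | succ x ih =>
      intro hx
      refine tr (ih (by omega)) (tr (y := ⟨n + (x+1), by omega⟩) ?_ (sy (up (x+1) hx)))
      refine step _ _ x (by omega) ?_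
      simp only [Lf]
      split_ifs <;> omega
  have all : ∀ x : Fin (2*n), ∃ g, φ g ⟨0, by omega⟩ = x := by
    intro x
    by_cases h : (x:ℕ) < n
    · exact zero x h
    · have := x.isLt
      have e : x = ⟨n + (x - n), by omega⟩ := by ext; simp; omega
      rw [e]
      exact tr (zero (x - n) (by omega)) (up (x - n) (by omega))
  intro x y
  exact tr (sy (all x)) (all y)
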